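/- For every n ≥ 3, the incidence submatrix of trees versus forests with an isolated vertex has full row rank: the matrix over ℚ whose rows are indexed by the isomorphism classes of forests on n vertices with n−2 edges having at least one isolated vertex, whose columns are indexed by the isomorphism classes of trees on n vertices, and whose entry at (f, t) is the number of edges e of (a representative of) t such that the forest obtained from t by deleting e is isomorphic to f, has linearly independent rows. -/

import Mathlib

/-- Isomorphy of simple graphs on `Fin n` as an equivalence relation. -/
def graphIsoSetoid (n : ℕ) : Setoid (SimpleGraph (Fin n)) where
  r G G' := Nonempty (G ≃g G')
  iseqv := by
    refine ⟨fun G => ⟨SimpleGraph.Iso.refl⟩, ?_, ?_⟩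
    · rintro G G' ⟨f⟩; exact ⟨f.symm⟩
    · rintro G G' G'' ⟨f⟩ ⟨g⟩; exact ⟨f.trans g⟩

/-- Remove all edges at `v`. -/
def delAt {V : Type*} (T : SimpleGraph V) (v : V) : SimpleGraph V where
  Adj a b := T.Adj a b ∧ a ≠ v ∧ b ≠ v
  symm := ⟨fun a b h => ⟨h.1.symm, h.2.2, h.2.1⟩⟩
  loopless := ⟨fun a h => T.loopless.irrefl a h.1⟩

/-- `v` has exactly one neighbour. -/
def IsLeafAt {V : Type*} (T : SimpleGraph V) (v : V) : Prop := ∃! u, T.Adj v u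

open Classical in
/-- Some neighbour of `v` (or `v` itself if there is none). -/
noncomputable def nbr {V : Type*} (T : SimpleGraph V) (v : V) : V :=
  if h : ∃ u, T.Adj v u then h.choose else v

lemma nbr_iff {V : Type*} {T : SimpleGraph V} {v : V} (h : IsLeafAt T v) (u : V) :
    T.Adj v u ↔ u = nbr T v := by
  have h' : ∃ u, T.Adj v u := h.exists
  have h2 : T.Adj v (nbr T v) := by
    unfold nbr; rw [dif_pos h']; exact h'.choose_spec
  constructor
  · intro hu; exact h.unique hu h2
  · rintro rfl; exact h2

lemma nbr_eq {V : Type*} {T : SimpleGraph V} {v u : V} (h : ∀ x, T.Adj v x ↔ x = u) :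
    nbr T v = u := by
  have hl : IsLeafAt T v := ⟨u, (h u).2 rfl, fun y hy => (h y).1 hy⟩
  exact ((nbr_iff hl u).1 ((h u).2 rfl)).symm

lemma swap_iso {V : Type*} [DecidableEq V] (R : SimpleGraph V) (v w z : V)
    (hv : ∀ x, ¬ R.Adj v x) (hw : ∀ x, ¬ R.Adj w x) (hzv : z ≠ v) (hzw : z ≠ w) :
    Nonempty ((R ⊔ SimpleGraph.edge w z) ≃g (R ⊔ SimpleGraph.edge v z)) := by
  refine ⟨⟨Equiv.swap v w, ?_⟩⟩
  intro a b
  have hv' : ∀ x, ¬ R.Adj x v := fun x h => hv x h.symm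
  have hw' : ∀ x, ¬ R.Adj x w := fun x h => hw x h.symm
  simp only [SimpleGraph.sup_adj, SimpleGraph.edge_adj, Equiv.swap_apply_def]
  grind

open Classical in
lemma pair_nonneg {V : Type*} [Fintype V] (F : SimpleGraph V → ℚ)
    (hinv : ∀ G H : SimpleGraph V, Nonempty (G ≃g H) → F G = F H) (v w : V) (hvw : v ≠ w) :
    0 ≤ ∑ T ∈ (Finset.univ : Finset (SimpleGraph V)).filter
        (fun T => (IsLeafAt T v ∧ IsLeafAt T w) ∧ ¬ T.Adj v w),
        F (delAt T v) * F (delAt T w) := by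
  have key : ∑ T ∈ (Finset.univ : Finset (SimpleGraph V)).filter
        (fun T => (IsLeafAt T v ∧ IsLeafAt T w) ∧ ¬ T.Adj v w),
        F (delAt T v) * F (delAt T w) =
      ∑ p ∈ ((Finset.univ : Finset (SimpleGraph V)).filter
          (fun R => (∀ x, ¬ R.Adj v x) ∧ ∀ x, ¬ R.Adj w x)) ×ˢ
          (((Finset.univ : Finset V).filter (fun x => x ≠ v ∧ x ≠ w)) ×ˢ
          ((Finset.univ : Finset V).filter (fun x => x ≠ v ∧ x ≠ w))),
        F (p.1 ⊔ SimpleGraph.edge w p.2.1) * F (p.1 ⊔ SimpleGraph.edge v p.2.2) := by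
    refine Finset.sum_nbij' (fun T => (delAt (delAt T v) w, nbr T w, nbr T v))
      (fun p => p.1 ⊔ SimpleGraph.edge w p.2.1 ⊔ SimpleGraph.edge v p.2.2) ?_ ?_ ?_ ?_ ?_
    · intro T hT
      simp only [Finset.mem_filter, Finset.mem_univ, true_and] at hT
      obtain ⟨⟨h1, h2⟩, h3⟩ := hT
      have a1 := (nbr_iff h1 (nbr T v)).2 rfl
      have a2 := (nbr_iff h2 (nbr T w)).2 rfl
      simp only [Finset.mem_product, Finset.mem_filter, Finset.mem_univ, true_and]
      refine ⟨⟨fun x h => h.1.2.1 rfl, fun x h => h.2.1 rfl⟩, ⟨?_, ?_⟩, ?_, ?_⟩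
      · intro h; rw [h] at a2; exact h3 a2.symm
      · exact a2.ne'
      · exact a1.ne'
      · intro h; rw [h] at a1; exact h3 a1
    · rintro ⟨R, z, u⟩ hp
      simp only [Finset.mem_product, Finset.mem_filter, Finset.mem_univ, true_and] at hp
      obtain ⟨⟨h1, h2⟩, ⟨h3, h4⟩, h5, h6⟩ := hp
      simp only [Finset.mem_filter, Finset.mem_univ, true_and]
      refine ⟨⟨⟨u, ?_, ?_⟩, ⟨z, ?_, ?_⟩⟩, ?_⟩ <;>
      simp only [SimpleGraph.sup_adj, SimpleGraph.edge_adj] <;> grind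
    · intro T hT
      simp only [Finset.mem_filter, Finset.mem_univ, true_and] at hT
      obtain ⟨⟨h1, h2⟩, h3⟩ := hT
      have a1 := nbr_iff h1
      have a2 := nbr_iff h2
      ext a b
      have sy := T.adj_comm
      have ir : ∀ a, ¬ T.Adj a a := fun a => T.irrefl
      simp only [SimpleGraph.sup_adj, SimpleGraph.edge_adj, delAt]
      grind
    · rintro ⟨R, z, u⟩ hp
      simp only [Finset.mem_product, Finset.mem_filter, Finset.mem_univ, true_and] at hp
      obtain ⟨⟨h1, h2⟩, ⟨h3, h4⟩, h5, h6⟩ := hp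
      have sy := R.adj_comm
      simp only [Prod.mk.injEq]
      refine ⟨?_, nbr_eq ?_, nbr_eq ?_⟩
      · ext a b
        simp only [SimpleGraph.sup_adj, SimpleGraph.edge_adj, delAt]
        grind
      · intro x
        simp only [SimpleGraph.sup_adj, SimpleGraph.edge_adj]
        grind
      · intro x
        simp only [SimpleGraph.sup_adj, SimpleGraph.edge_adj]
        grind
    · intro T hT
      simp only [Finset.mem_filter, Finset.mem_univ, true_and] at hT
      obtain ⟨⟨h1, h2⟩, h3⟩ := hT
      have a1 := nbr_iff h1
      have a2 := nbr_iff h2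
      have sy := T.adj_comm
      have ir : ∀ a, ¬ T.Adj a a := fun a => T.irrefl
      congr 2
      · ext a b
        simp only [SimpleGraph.sup_adj, SimpleGraph.edge_adj, delAt]
        grind
      · ext a b
        simp only [SimpleGraph.sup_adj, SimpleGraph.edge_adj, delAt]
        grind
  rw [key, Finset.sum_product]
  refine Finset.sum_nonneg fun R hR => ?_
  simp only [Finset.mem_filter, Finset.mem_univ, true_and] at hR
  rw [Finset.sum_product]
  simp only
  rw [← Finset.sum_mul_sum]
  have : ∑ z ∈ (Finset.univ : Finset V).filter (fun x => x ≠ v ∧ x ≠ w),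
        F (R ⊔ SimpleGraph.edge w z) =
      ∑ z ∈ (Finset.univ : Finset V).filter (fun x => x ≠ v ∧ x ≠ w),
        F (R ⊔ SimpleGraph.edge v z) := by
    refine Finset.sum_congr rfl fun z hz => ?_
    simp only [Finset.mem_filter, Finset.mem_univ, true_and] at hz
    exact hinv _ _ (swap_iso R v w z hR.1 hR.2 hz.1 hz.2)
  rw [this]
  exact mul_self_nonneg _

open Classical in
lemma pair_nonneg' {V : Type*} [Fintype V] (F : SimpleGraph V → ℚ)
    (hinv : ∀ G H : SimpleGraph V, Nonempty (G ≃g H) → F G = F H) (v w : V) (hvw : v ≠ w) :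
    0 ≤ ∑ T : SimpleGraph V, (if IsLeafAt T v then F (delAt T v) else 0) *
      (if IsLeafAt T w then F (delAt T w) else 0) := by
  have e : ∑ T : SimpleGraph V, (if IsLeafAt T v then F (delAt T v) else 0) *
      (if IsLeafAt T w then F (delAt T w) else 0) =
      ∑ T ∈ (Finset.univ : Finset (SimpleGraph V)).filter
        (fun T => IsLeafAt T v ∧ IsLeafAt T w), F (delAt T v) * F (delAt T w) := by
    rw [Finset.sum_filter]
    refine Finset.sum_congr rfl fun T _ => ?_
    by_cases h1 : IsLeafAt T v <;> by_cases h2 : IsLeafAt T w <;> simp [h1, h2]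
  rw [e, ← Finset.sum_filter_add_sum_filter_not _ (fun T : SimpleGraph V => T.Adj v w),
    Finset.filter_filter, Finset.filter_filter]
  refine add_nonneg (Finset.sum_nonneg fun T hT => ?_) (pair_nonneg F hinv v w hvw)
  simp only [Finset.mem_filter, Finset.mem_univ, true_and] at hT
  obtain ⟨⟨h1, h2⟩, h3⟩ := hT
  have : delAt T v = delAt T w := by
    have a1 := nbr_iff h1
    have a2 := nbr_iff h2
    have sy := T.adj_comm
    ext a b
    simp only [delAt]
    grind
  rw [this]
  exact mul_self_nonneg _

open Classical in
lemma core_vanish {V : Type*} [Fintype V] (F : SimpleGraph V → ℚ)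
    (hinv : ∀ G H : SimpleGraph V, Nonempty (G ≃g H) → F G = F H)
    (hA : ∀ T : SimpleGraph V, ∑ v, (if IsLeafAt T v then F (delAt T v) else 0) = 0)
    (T : SimpleGraph V) (v : V) (hv : IsLeafAt T v) : F (delAt T v) = 0 := by
  set a : SimpleGraph V → V → ℚ := fun T v => if IsLeafAt T v then F (delAt T v) else 0 with ha
  have h0 : ∑ v, ∑ w, ∑ T, a T v * a T w = 0 := by
    have : ∀ v, ∑ w, ∑ T, a T v * a T w = 0 := by
      intro v
      rw [Finset.sum_comm]
      refine Finset.sum_eq_zero fun T _ => ?_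
      rw [← Finset.mul_sum, hA T, mul_zero]
    exact Finset.sum_eq_zero fun v _ => this v
  have hpos : ∀ v w, 0 ≤ ∑ T, a T v * a T w := by
    intro v w
    by_cases h : v = w
    · subst h; exact Finset.sum_nonneg fun T _ => mul_self_nonneg _
    · exact pair_nonneg' F hinv v w h
  have h1 := (Finset.sum_eq_zero_iff_of_nonneg
    (fun v _ => Finset.sum_nonneg fun w _ => hpos v w)).1 h0 v (Finset.mem_univ _)
  have h2 := (Finset.sum_eq_zero_iff_of_nonneg (fun w _ => hpos v w)).1 h1 v (Finset.mem_univ _)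
  have h3 := (Finset.sum_eq_zero_iff_of_nonneg (fun T _ => mul_self_nonneg (a T v))).1 h2 T
    (Finset.mem_univ _)
  have h4 := mul_self_eq_zero.1 h3
  simpa [ha, hv] using h4

/-- Forest with `n - 2` edges and an isolated vertex. -/
def IsoForest {n : ℕ} (G : SimpleGraph (Fin n)) : Prop :=
  G.IsAcyclic ∧ G.edgeSet.ncard = n - 2 ∧ ∃ v, ∀ w, ¬ G.Adj v w

lemma ncard_edges_iso {V : Type*} {G H : SimpleGraph V} (φ : G ≃g H) :
    G.edgeSet.ncard = H.edgeSet.ncard :=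
  Nat.card_congr φ.mapEdgeSet

lemma IsoForest.of_iso {n : ℕ} {G H : SimpleGraph (Fin n)} (φ : G ≃g H) (h : IsoForest G) :
    IsoForest H := by
  obtain ⟨h1, h2, v, h3⟩ := h
  refine ⟨φ.isAcyclic_iff.1 h1, (ncard_edges_iso φ) ▸ h2, φ v, fun w hw => h3 (φ.symm w) ?_⟩
  rw [← φ.map_adj_iff]
  simpa using hw

lemma tree_of_acyclic {n : ℕ} (hn : 3 ≤ n) (T : SimpleGraph (Fin n)) (h : T.IsAcyclic)
    (hc : T.edgeSet.ncard = n - 1) : T.Connected := by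
  haveI : Nonempty (Fin n) := ⟨⟨0, by omega⟩⟩
  obtain ⟨S, hTS, -, hS⟩ :=
    SimpleGraph.Connected.exists_isTree_le_of_le_of_isAcyclic
      (SimpleGraph.connected_top (V := Fin n)) le_top h
  have h2 := (SimpleGraph.isTree_iff_connected_and_card.1 hS).2
  rw [Nat.card_eq_fintype_card (α := Fin n), Fintype.card_fin] at h2
  have h3 : S.edgeSet.ncard + 1 = n := h2
  have : T.edgeSet = S.edgeSet :=
    Set.eq_of_subset_of_ncard_le (SimpleGraph.edgeSet_mono hTS) (by omega) (Set.toFinite _)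
  rw [SimpleGraph.edgeSet_injective this]
  exact hS.1

lemma add_leaf_tree {n : ℕ} (hn : 3 ≤ n) (G : SimpleGraph (Fin n)) (h : IsoForest G)
    (v u : Fin n) (hv : ∀ x, ¬ G.Adj v x) (hvu : v ≠ u) :
    (G ⊔ SimpleGraph.edge v u).Connected ∧
      (G ⊔ SimpleGraph.edge v u).edgeSet.ncard = n - 1 := by
  have hc : (G ⊔ SimpleGraph.edge v u).edgeSet.ncard = n - 1 := by
    rw [SimpleGraph.edgeSet_sup, SimpleGraph.edgeSet_edge_of_ne hvu, Set.union_singleton,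
      Set.ncard_insert_of_notMem (a := s(v, u)) (s := G.edgeSet)
        (fun hm => hv u hm) (Set.toFinite _), h.2.1]
    omega
  refine ⟨tree_of_acyclic hn _ ?_ hc, hc⟩
  refine SimpleGraph.IsAcyclic.sup_edge_of_not_reachable ?_ h.1
  rintro ⟨p⟩
  cases p with
  | nil => exact hvu rfl
  | cons h' _ => exact hv _ h'

/-- In a connected graph on at least three vertices two leaves are not adjacent. -/
lemma leaves_not_adj {n : ℕ} (hn : 3 ≤ n) (T : SimpleGraph (Fin n)) (hT : T.Connected)
    (v w : Fin n) (hv : IsLeafAt T v) (hw : IsLeafAt T w) : ¬ T.Adj v w := by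
  intro hvw
  have a1 := nbr_iff hv
  have a2 := nbr_iff hw
  have hall : ∀ x, x = v ∨ x = w := by
    have : ∀ a b, T.Walk a b → (a = v ∨ a = w) → (b = v ∨ b = w) := by
      intro a b p
      induction p with
      | nil => exact id
      | cons h _ ih =>
        intro ha
        apply ih
        have := T.adj_comm
        grind
    intro x
    exact this v x (hT.preconnected v x).some (Or.inl rfl)
  have : (Finset.univ : Finset (Fin n)).card ≤ ({v, w} : Finset (Fin n)).card :=
    Finset.card_le_card (fun x _ => by simpa using hall x)
  have h2 := Finset.card_le_two (a := v) (b := w)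
  rw [Finset.card_univ, Fintype.card_fin] at this
  omega

open Classical in
lemma edge_sum_eq {n : ℕ} (hn : 3 ≤ n) (F : SimpleGraph (Fin n) → ℚ)
    (hF : ∀ G, F G ≠ 0 → IsoForest G) (T : SimpleGraph (Fin n)) (hT : T.Connected) :
    ∑ e ∈ T.edgeFinset, F (T.deleteEdges {e}) =
      ∑ v, (if IsLeafAt T v then F (delAt T v) else 0) := by
  rw [← Finset.sum_filter]
  have hinj : Set.InjOn (fun v => s(v, nbr T v))
      ((Finset.univ.filter (fun v => IsLeafAt T v) : Finset (Fin n)) : Set (Fin n)) := by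
    intro v hv w hw h
    simp only [Finset.coe_filter, Finset.mem_univ, true_and, Set.mem_setOf_eq] at hv hw
    by_contra hne
    simp only [Sym2.eq_iff] at h
    rcases h with h | h
    · exact hne h.1
    · exact leaves_not_adj hn T hT v w hv hw ((nbr_iff hv w).2 h.2.symm)
  have e1 : ∑ v ∈ Finset.univ.filter (fun v => IsLeafAt T v), F (delAt T v) =
      ∑ e ∈ (Finset.univ.filter (fun v => IsLeafAt T v)).image (fun v => s(v, nbr T v)),
        F (T.deleteEdges {e}) := by
    rw [Finset.sum_image hinj]
    refine Finset.sum_congr rfl fun v hv => ?_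
    simp only [Finset.mem_filter, Finset.mem_univ, true_and] at hv
    congr 1
    have a1 := nbr_iff hv
    have sy := T.adj_comm
    ext a b
    simp only [delAt, SimpleGraph.deleteEdges_adj, Set.mem_singleton_iff, Sym2.eq_iff]
    grind
  rw [e1]
  symm
  apply Finset.sum_subset
  · intro e he
    simp only [Finset.mem_image, Finset.mem_filter, Finset.mem_univ, true_and] at he
    obtain ⟨v, hv, rfl⟩ := he
    simpa using (nbr_iff hv _).2 rfl
  · intro e he hne
    by_contra hF0
    obtain ⟨-, -, x, hx⟩ := hF _ hF0
    apply hne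
    haveI : Nontrivial (Fin n) := Fin.nontrivial_iff_two_le.2 (by omega)
    obtain ⟨y, hy⟩ := hT.preconnected.exists_adj_of_nontrivial x
    have hall : ∀ z, T.Adj x z → s(x, z) = e := by
      intro z hz
      by_contra hc
      exact hx z (by simp [SimpleGraph.deleteEdges_adj, hz, hc])
    have hl : IsLeafAt T x := by
      refine ⟨y, hy, fun z hz => ?_⟩
      have := (hall z hz).trans (hall y hy).symm
      rw [Sym2.eq_iff] at this
      grind
    simp only [Finset.mem_image, Finset.mem_filter, Finset.mem_univ, true_and]
    exact ⟨x, hl, hall _ ((nbr_iff hl _).2 rfl)⟩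

open Classical in
lemma leaf_sum_iso {V : Type*} [Fintype V] (F : SimpleGraph V → ℚ)
    (hinv : ∀ G H : SimpleGraph V, Nonempty (G ≃g H) → F G = F H)
    {G H : SimpleGraph V} (φ : G ≃g H) :
    ∑ v, (if IsLeafAt G v then F (delAt G v) else 0) =
      ∑ v, (if IsLeafAt H v then F (delAt H v) else 0) := by
  refine Fintype.sum_equiv φ.toEquiv _ _ fun v => ?_
  have h1 : IsLeafAt G v ↔ IsLeafAt H (φ v) := by
    unfold IsLeafAt
    rw [φ.toEquiv.existsUnique_congr]
    intro a
    exact φ.map_adj_iff.symm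
  have h2 : F (delAt G v) = F (delAt H (φ v)) := by
    refine hinv _ _ ⟨⟨φ.toEquiv, ?_⟩⟩
    intro a b
    change (H.Adj (φ a) (φ b) ∧ φ a ≠ φ v ∧ φ b ≠ φ v) ↔ (G.Adj a b ∧ a ≠ v ∧ b ≠ v)
    rw [φ.map_adj_iff, φ.injective.ne_iff, φ.injective.ne_iff]
  change _ = if IsLeafAt H (φ v) then F (delAt H (φ v)) else 0
  simp only [h1, h2]

theorem stmt19 (n : ℕ) (hn : 3 ≤ n) :
    LinearIndependent ℚ
      (fun f : {c : Quotient (graphIsoSetoid n) //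
            (Quotient.out c).IsAcyclic ∧ (Quotient.out c).edgeSet.ncard = n - 2 ∧
            ∃ v, ∀ w, ¬ (Quotient.out c).Adj v w} =>
        fun t : {c : Quotient (graphIsoSetoid n) //
            (Quotient.out c).Connected ∧ (Quotient.out c).edgeSet.ncard = n - 1} =>
          (Set.ncard {e ∈ (Quotient.out t.1).edgeSet |
              Nonempty ((Quotient.out t.1).deleteEdges {e} ≃g Quotient.out f.1)} : ℚ)) := by
  classical
  haveI : Fintype (Quotient (graphIsoSetoid n)) := Fintype.ofFinite _
  have outIso : ∀ G : SimpleGraph (Fin n),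
      Nonempty (Quotient.out (Quotient.mk (graphIsoSetoid n) G) ≃g G) := fun G =>
    Quotient.exact (Quotient.out_eq (Quotient.mk (graphIsoSetoid n) G))
  rw [Fintype.linearIndependent_iff]
  intro c hc f
  let F : SimpleGraph (Fin n) → ℚ := fun G =>
    if h : IsoForest (Quotient.out (Quotient.mk (graphIsoSetoid n) G)) then
      c ⟨Quotient.mk (graphIsoSetoid n) G, h⟩ else 0
  have hinv : ∀ G H : SimpleGraph (Fin n), Nonempty (G ≃g H) → F G = F H := by
    intro G H h
    have : Quotient.mk (graphIsoSetoid n) G = Quotient.mk (graphIsoSetoid n) H :=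
      Quotient.sound h
    simp only [F]
    rw! [this]
    rfl
  have hF : ∀ G, F G ≠ 0 → IsoForest G := by
    intro G hG
    by_cases h : IsoForest (Quotient.out (Quotient.mk (graphIsoSetoid n) G))
    · exact h.of_iso (outIso G).some
    · exact absurd (dif_neg h) hG
  have hFind : ∀ G, F G = ∑ i, c i * (if Nonempty (G ≃g Quotient.out i.1) then 1 else 0) := by
    intro G
    have hiff : ∀ q : Quotient (graphIsoSetoid n), Nonempty (G ≃g Quotient.out q) ↔
        q = Quotient.mk (graphIsoSetoid n) G := by
      intro q
      constructor
      · rintro h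
        rw [← Quotient.out_eq q]
        exact (Quotient.sound h).symm
      · rintro rfl
        exact ⟨(outIso G).some.symm⟩
    simp only [hiff, mul_ite, mul_one, mul_zero]
    by_cases h : IsoForest (Quotient.out (Quotient.mk (graphIsoSetoid n) G))
    · rw [Finset.sum_eq_single ⟨Quotient.mk (graphIsoSetoid n) G, h⟩]
      · simp [F, h]
      · intro b _ hb
        rw [if_neg]
        intro hb'
        exact hb (Subtype.ext hb')
      · intro h'; exact absurd (Finset.mem_univ _) h'
    · rw [Finset.sum_eq_zero]
      · exact dif_neg h
      · intro b _
        rw [if_neg]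
        intro hb'
        exact h (hb' ▸ b.2)
  have hTree : ∀ T : SimpleGraph (Fin n), T.Connected → T.edgeSet.ncard = n - 1 →
      ∑ v, (if IsLeafAt T v then F (delAt T v) else 0) = 0 := by
    intro T hT hTc
    obtain ⟨φ⟩ := outIso T
    have hC := φ.connected_iff.2 hT
    have hE := (ncard_edges_iso φ).trans hTc
    rw [← leaf_sum_iso F hinv φ, ← edge_sum_eq hn F hF _ hC]
    have h1 := congrFun hc ⟨Quotient.mk (graphIsoSetoid n) T, hC, hE⟩
    simp only [Finset.sum_apply, Pi.smul_apply, smul_eq_mul, Pi.zero_apply] at h1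
    rw [← h1]
    simp only [hFind]
    rw [Finset.sum_comm]
    refine Finset.sum_congr rfl fun i _ => ?_
    rw [← Finset.mul_sum]
    congr 1
    rw [Finset.sum_boole]
    congr 1
    rw [← Set.ncard_coe_finset]
    congr 1
    ext e
    simp
  have hA : ∀ T : SimpleGraph (Fin n),
      ∑ v, (if IsLeafAt T v then F (delAt T v) else 0) = 0 := by
    intro T
    by_contra hne
    obtain ⟨v, -, hv⟩ := Finset.exists_ne_zero_of_sum_ne_zero hne
    by_cases hl : IsLeafAt T v
    · rw [if_pos hl] at hv
      have a1 := nbr_iff hl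
      have sy := T.adj_comm
      have hTe : T = delAt T v ⊔ SimpleGraph.edge v (nbr T v) := by
        have ir : ∀ a, ¬ T.Adj a a := fun a => T.irrefl
        ext a b
        simp only [SimpleGraph.sup_adj, SimpleGraph.edge_adj, delAt]
        grind
      have := add_leaf_tree hn (delAt T v) (hF _ hv) v (nbr T v) (fun x h => h.2.1 rfl)
        ((a1 _).2 rfl).ne
      rw [← hTe] at this
      exact hne (hTree T this.1 this.2)
    · exact hv (if_neg hl)
  have hcf : c f = F (Quotient.out f.1) := by
    have hf : IsoForest (Quotient.out f.1) := f.2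
    simp only [F]
    rw! [Quotient.out_eq f.1]
    rw [dif_pos hf]
  rw [hcf]
  obtain ⟨-, -, v, hv⟩ := f.2
  haveI : Nontrivial (Fin n) := Fin.nontrivial_iff_two_le.2 (by omega)
  obtain ⟨u, hu⟩ := exists_ne v
  have hv' : ∀ x, ¬ (Quotient.out f.1).Adj x v := fun x h => hv x h.symm
  have hd : delAt (Quotient.out f.1 ⊔ SimpleGraph.edge v u) v = Quotient.out f.1 := by
    ext a b
    simp only [SimpleGraph.sup_adj, SimpleGraph.edge_adj, delAt]
    grind
  have := core_vanish F hinv hA (Quotient.out f.1 ⊔ SimpleGraph.edge v u) v (by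
    refine ⟨u, ?_, ?_⟩ <;> simp only [SimpleGraph.sup_adj, SimpleGraph.edge_adj] <;> grind)
  rwa [hd] at this
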